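/- arXiv:2509.05139 — 2 statements merged into one kernel-verified Lean document; each statement's English description precedes it below -/
import Mathlib

section
/- Let p = <P,F,O> and p' = <P',F',O'> be consistent ODRL Lite policies. If p is not contained in p' (some state of the world is valid for p but not valid for p'), then either P is not contained in P' as rule sets, or there exists an obligation rule τ' ∈ O' such that no obligation rule τ ∈ O satisfies τ ⊑ τ'. -/
/-- An event rule is identified with its matching predicate on events. -/
abbrev EventRule (Event : Type*) := Event → Prop

/-- Rule containment: every event matching `τ` matches `τ'`. -/
def RuleContained {Event : Type*} (τ τ' : EventRule Event) : Prop :=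
  ∀ e, τ e → τ' e

/-- Rule-set containment: every event matching some rule of `S` matches some rule of `S'`. -/
def RuleSetContained {Event : Type*} (S S' : Set (EventRule Event)) : Prop :=
  ∀ e, (∃ τ ∈ S, τ e) → (∃ τ' ∈ S', τ' e)

/-- Rule sets overlap: some event matches a rule of `S` and a rule of `S'`. -/
def RuleSetOverlap {Event : Type*} (S S' : Set (EventRule Event)) : Prop :=
  ∃ e, (∃ τ ∈ S, τ e) ∧ (∃ τ' ∈ S', τ' e)

/-- An ODRL Lite policy: permissions, prohibitions and obligations. -/
structure ODRLLitePolicy (Event : Type*) where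
  P : Set (EventRule Event)
  F : Set (EventRule Event)
  O : Set (EventRule Event)

/-- A state of the world `ω` violates a policy `p`. -/
def Violates {Event : Type*} (ω : Set Event) (p : ODRLLitePolicy Event) : Prop :=
  (∃ e ∈ ω, ∀ τ ∈ p.P, ¬ τ e) ∨
  (∃ e ∈ ω, ∃ τ ∈ p.F, τ e) ∨
  (∃ τ ∈ p.O, ∀ e ∈ ω, ¬ τ e)

/-- `ω` is valid for `p` if it does not violate it. -/
def Valid {Event : Type*} (ω : Set Event) (p : ODRLLitePolicy Event) : Prop :=
  ¬ Violates ω p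

/-- Policy containment: every state of the world valid for `p` is valid for `p'`. -/
def PolicyContained {Event : Type*} (p p' : ODRLLitePolicy Event) : Prop :=
  ∀ ω : Set Event, Valid ω p → Valid ω p'

/-- A policy is consistent if permissions and prohibitions do not overlap,
obligations and prohibitions do not overlap, and obligations are contained
in permissions. -/
def Consistent {Event : Type*} (p : ODRLLitePolicy Event) : Prop :=
  ¬ RuleSetOverlap p.P p.F ∧ ¬ RuleSetOverlap p.O p.F ∧ RuleSetContained p.O p.P

section

variable {Event : Type*} {p p' : ODRLLitePolicy Event}

theorem valid_iff {ω : Set Event} :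
    Valid ω p ↔ (∀ e ∈ ω, ∃ τ ∈ p.P, τ e) ∧ (∀ e ∈ ω, ∀ τ ∈ p.F, ¬ τ e) ∧
      ∀ τ ∈ p.O, ∃ e ∈ ω, τ e := by
  simp only [Valid, Violates, not_or, not_exists, not_and, not_forall, not_not, exists_prop]

theorem policyContained_of_ruleSetContained_of_forall_exists_ruleContained
    (hPF : ¬ RuleSetOverlap p'.P p'.F) (hP : RuleSetContained p.P p'.P)
    (hO : ∀ τ' ∈ p'.O, ∃ τ ∈ p.O, RuleContained τ τ') :
    PolicyContained p p' := by
  intro ω hω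
  obtain ⟨permitted, -, fulfilled⟩ := valid_iff.mp hω
  have permitted' : ∀ e ∈ ω, ∃ τ' ∈ p'.P, τ' e := fun e he => hP e (permitted e he)
  have not_prohibited' : ∀ e ∈ ω, ∀ τ' ∈ p'.F, ¬ τ' e := fun e he τ' hτ' hmatch =>
    hPF ⟨e, permitted' e he, τ', hτ', hmatch⟩
  have fulfilled' : ∀ τ' ∈ p'.O, ∃ e ∈ ω, τ' e := by
    intro τ' hτ'
    obtain ⟨τ, hτ, hττ'⟩ := hO τ' hτ'
    obtain ⟨e, he, hmatch⟩ := fulfilled τ hτ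
    exact ⟨e, he, hττ' e hmatch⟩
  exact valid_iff.mpr ⟨permitted', not_prohibited', fulfilled'⟩

theorem stmt1_general (hPF : ¬ RuleSetOverlap p'.P p'.F) (h : ¬ PolicyContained p p') :
    ¬ RuleSetContained p.P p'.P ∨
      ∃ τ' ∈ p'.O, ∀ τ ∈ p.O, ¬ RuleContained τ τ' := by
  contrapose! h
  obtain ⟨hP, hO⟩ := h
  exact policyContained_of_ruleSetContained_of_forall_exists_ruleContained hPF hP hO

end

/-- For consistent policies, if `p` is not contained in `p'`,
then either the permissions of `p` are not contained in those of `p'`, or some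
obligation of `p'` contains no obligation of `p`. -/
theorem stmt1 {Event : Type*} (p p' : ODRLLitePolicy Event)
    (hp : Consistent p) (hp' : Consistent p')
    (h : ¬ PolicyContained p p') :
    ¬ RuleSetContained p.P p'.P ∨
      ∃ τ' ∈ p'.O, ∀ τ ∈ p.O, ¬ RuleContained τ τ' :=
  stmt1_general hp'.1 h
end

section
/- Making a policy consistent does not change its meaning: given an ODRL Lite policy <P,F,O>, let P* consist of the rules τ* for τ ∈ P whose matching predicate is 'e matches τ and e matches no rule of F', and let O* consist of the rules τ* for τ ∈ O whose matching predicate is 'e matches τ, e matches some rule of P, and e matches no rule of F'. Then for every state of the world ω, ω violates <P,F,O> if and only if ω violates <P*, F, O*>. -/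
/-!
In a valid state every event matches a permission and no prohibition, so restricting permissions
and obligations to conditions that all such events satisfy cannot be noticed there. Conversely,
restricted rules are matched by fewer events, so a state valid for the restricted policy is valid
for the original one.
-/

/-- The rule matched by the events that match `τ` and satisfy the condition `C`; this is the common
shape of the starred rules `τ*`. -/
def EventRule.restrict {Event : Type*} (C : Event → Prop) (τ : EventRule Event) :
    EventRule Event :=
  fun e => τ e ∧ C e

/-- An event is admissible for a policy if it matches some permission and no prohibition, so that
its occurrence violates neither of these two parts of the policy. -/
def ODRLLitePolicy.Admissible {Event : Type*} (p : ODRLLitePolicy Event) (e : Event) : Prop :=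
  (∃ σ ∈ p.P, σ e) ∧ ¬ ∃ σ ∈ p.F, σ e

section

variable {Event : Type*}

theorem exists_mem_image_restrict_iff (C : Event → Prop) (S : Set (EventRule Event)) (e : Event) :
    (∃ σ ∈ EventRule.restrict C '' S, σ e) ↔ (∃ σ ∈ S, σ e) ∧ C e := by
  simp only [Set.exists_mem_image, EventRule.restrict, ← and_assoc, exists_and_right]

theorem valid_iff_admissible_and_obligations_met (p : ODRLLitePolicy Event) (ω : Set Event) :
    Valid ω p ↔ (∀ e ∈ ω, p.Admissible e) ∧ ∀ τ ∈ p.O, ∃ e ∈ ω, τ e := by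
  simp only [Valid, Violates, ODRLLitePolicy.Admissible, forall₂_and, not_or, and_assoc]
  push Not
  rfl

theorem admissible_restrict_permissions_iff (p : ODRLLitePolicy Event) {C : Event → Prop}
    (hC : ∀ e, p.Admissible e → C e) (O' : Set (EventRule Event)) (e : Event) :
    ODRLLitePolicy.Admissible ⟨EventRule.restrict C '' p.P, p.F, O'⟩ e ↔ p.Admissible e := by
  constructor
  · rintro ⟨hP, hF⟩
    exact ⟨((exists_mem_image_restrict_iff C p.P e).mp hP).1, hF⟩
  · intro he
    exact ⟨(exists_mem_image_restrict_iff C p.P e).mpr ⟨he.1, hC e he⟩, he.2⟩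

theorem obligations_met_restrict_iff {C : Event → Prop} {ω : Set Event} (hC : ∀ e ∈ ω, C e)
    (O : Set (EventRule Event)) :
    (∀ τ ∈ EventRule.restrict C '' O, ∃ e ∈ ω, τ e) ↔ ∀ τ ∈ O, ∃ e ∈ ω, τ e := by
  rw [Set.forall_mem_image]
  refine forall₂_congr fun τ _ => exists_congr fun e => and_congr_right fun he => ?_
  exact and_iff_left (hC e he)

theorem stmt7_general (p : ODRLLitePolicy Event) (ω : Set Event) {C D : Event → Prop}
    (hC : ∀ e, p.Admissible e → C e) (hD : ∀ e, p.Admissible e → D e) :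
    Violates ω p ↔
      Violates ω ⟨EventRule.restrict C '' p.P, p.F, EventRule.restrict D '' p.O⟩ := by
  suffices Valid ω p ↔
      Valid ω ⟨EventRule.restrict C '' p.P, p.F, EventRule.restrict D '' p.O⟩ from
    not_iff_not.mp this
  simp only [valid_iff_admissible_and_obligations_met, admissible_restrict_permissions_iff p hC]
  refine and_congr_right fun hω => ?_
  exact (obligations_met_restrict_iff (fun e he => hD e (hω e he)) p.O).symm

end

/-- Making a policy consistent does not change its meaning:
`ω` violates `⟨P,F,O⟩` iff it violates `⟨P*,F,O*⟩`, where `P*` restricts each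
permission to events not matching any prohibition, and `O*` restricts each
obligation to events matching a permission and no prohibition. -/
theorem stmt7 {Event : Type*} (p : ODRLLitePolicy Event) (ω : Set Event) :
    Violates ω p ↔
      Violates ω ⟨(fun τ : EventRule Event =>
                     fun e => τ e ∧ ¬ ∃ σ ∈ p.F, σ e) '' p.P,
                  p.F,
                  (fun τ : EventRule Event =>
                     fun e => τ e ∧ (∃ σ ∈ p.P, σ e) ∧ ¬ ∃ σ ∈ p.F, σ e) '' p.O⟩ := by
  exact stmt7_general p ω (fun _ he => he.2) (fun _ he => he)
end
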